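/- For every positive integer n there exists a bipartite permutation graph with exactly n² vertices that contains every bipartite permutation graph with n vertices as an induced subgraph. -/

import Mathlib

/-- `S` is an independent set in `G`. -/
def IndepSet {V : Type*} (G : SimpleGraph V) (S : Set V) : Prop :=
  ∀ ⦃x⦄, x ∈ S → ∀ ⦃y⦄, y ∈ S → ¬ G.Adj x y

/-- A graph is bipartite if its vertices can be partitioned into at most two
independent sets. -/
def IsBipartiteGraph {V : Type*} (G : SimpleGraph V) : Prop :=
  ∃ A : Set V, IndepSet G A ∧ IndepSet G Aᶜ

/-- The permutation graph of `π`: vertices are positions, and `i`, `j` are adjacent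
iff `i < j` and `π i > π j`. -/
def permGraph {n : ℕ} (π : Equiv.Perm (Fin n)) : SimpleGraph (Fin n) :=
  SimpleGraph.fromRel (fun i j => i < j ∧ π j < π i)

/-- A graph is a permutation graph if it is isomorphic to `G_π` for some permutation `π`. -/
def IsPermutationGraph {V : Type*} (G : SimpleGraph V) : Prop :=
  ∃ (n : ℕ) (π : Equiv.Perm (Fin n)), Nonempty (G ≃g permGraph π)

/-- inversion -/
def BInv {V : Type} (p q : V → ℕ) (x y : V) : Prop := p x < p y ∧ q y < q x

def BAdj {V : Type} (p q : V → ℕ) (x y : V) : Prop := BInv p q x y ∨ BInv p q y x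

lemma BAdj_swap {V : Type} (p q : V → ℕ) (x y : V) : BAdj q p x y ↔ BAdj p q x y := by
  unfold BAdj BInv; tauto

def BGrid {V : Type} (c : V → ℕ) (r : V → ℚ) (x y : V) : Prop :=
  (c y = c x + 1 ∧ r y < r x) ∨ (c x = c y + 1 ∧ r x < r y)

structure BConf {V : Type} (p q : V → ℕ) (U : V → Prop) : Prop where
  pinj : Function.Injective p
  qinj : Function.Injective q
  up : ∀ x y, BInv p q x y → U x
  lo : ∀ x y, BInv p q x y → ¬ U y

lemma BConf.swap {V : Type} {p q : V → ℕ} {U : V → Prop} (h : BConf p q U) :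
    BConf q p (fun x => ¬ U x) :=
  ⟨h.qinj, h.pinj, fun x y hxy => h.lo y x ⟨hxy.2, hxy.1⟩,
    fun x y hxy => not_not.2 (h.up y x ⟨hxy.2, hxy.1⟩)⟩

structure BStart {V : Type} (p : V → ℕ) (U : V → Prop) (S F : Finset V) : Prop where
  sub : F ⊆ S
  ne : F.Nonempty
  inU : ∀ x ∈ F, U x
  init : ∀ x ∈ F, ∀ y ∈ S, U y → p y < p x → y ∈ F
  before : ∀ x ∈ F, ∀ y ∈ S, ¬ U y → p x < p y

structure BLay {V : Type} (p q : V → ℕ) (S F : Finset V) (c : V → ℕ) (r : V → ℚ) : Prop where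
  zero : ∀ x ∈ S, c x = 0 ↔ x ∈ F
  bd : ∀ x ∈ S, c x < S.card
  adj : ∀ x ∈ S, ∀ y ∈ S, BAdj p q x y ↔ BGrid c r x y
  mono : ∀ x ∈ S, ∀ y ∈ S, c x = c y → p x < p y → r x < r y

lemma BLay.swap {V : Type} {p q : V → ℕ} {S F : Finset V} {c : V → ℕ} {r : V → ℚ}
    (hq : Function.Injective q) (h : BLay q p S F c r) : BLay p q S F c r := by
  refine ⟨h.zero, h.bd, fun x hx y hy => (BAdj_swap p q x y).symm.trans (h.adj x hx y hy), ?_⟩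
  intro x hx y hy hc hp
  apply h.mono x hx y hy hc
  by_contra hlt
  have hne : q x ≠ q y := fun e => by rw [hq e] at hp; exact lt_irrefl _ hp
  have : BAdj q p x y := Or.inr ⟨by omega, hp⟩
  rw [h.adj x hx y hy] at this
  rcases this with h | h <;> omega

lemma exists_start {V : Type} [DecidableEq V] {p q : V → ℕ} {U : V → Prop} (h : BConf p q U)
    (S : Finset V) (hS : S.Nonempty) :
    ∃ F, BStart p U S F ∨ BStart q (fun x => ¬ U x) S F := by
  obtain ⟨x, hx, hmin⟩ := S.exists_min_image p hS
  have hlt : ∀ y ∈ S, y ≠ x → p x < p y := fun y hy hne =>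
    lt_of_le_of_ne (hmin y hy) (fun e => hne (h.pinj e).symm)
  refine ⟨{x}, ?_⟩
  by_cases hU : U x
  · left
    refine ⟨by simpa using hx, by simp, by simpa using hU, ?_, ?_⟩
    · intro z hz y hy _ hlt'
      rw [Finset.mem_singleton] at hz; subst hz
      have := hmin y hy; omega
    · intro z hz y hy hyU
      rw [Finset.mem_singleton] at hz; subst hz
      exact hlt y hy (fun e => hyU (e ▸ hU))
  · right
    refine ⟨by simpa using hx, by simp, by simpa using hU, ?_, ?_⟩
    · intro z hz y hy _ hlt'
      rw [Finset.mem_singleton] at hz; subst hz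
      have hne : y ≠ z := fun e => by subst e; omega
      exact absurd (h.up z y ⟨hlt y hy hne, hlt'⟩) hU
    · intro z hz y hy hyU
      rw [Finset.mem_singleton] at hz; subst hz
      rw [not_not] at hyU
      have hne : y ≠ z := fun e => hU (e ▸ hyU)
      by_contra hcon
      have : q y ≠ q z := fun e => hne (h.qinj e)
      exact hU (h.up z y ⟨hlt y hy hne, by omega⟩)

/-- Adding one point. -/
lemma lay_insert {V : Type} [DecidableEq V] {p q : V → ℕ} {S F F' : Finset V} {u : V}
    (hu : u ∈ S) (c' : V → ℕ) (r' : V → ℚ) (t : ℚ) (d : ℕ) (hd : d ≤ 1)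
    (h0 : ∀ x ∈ S, x ≠ u → (c' x + d = 0 ↔ x ∈ F)) (huF : u ∈ F)
    (hl : BLay p q (S.erase u) F' c' r')
    (hadj : ∀ x ∈ S, x ≠ u → (BAdj p q u x ↔ (c' x + d = 1 ∧ r' x < t)))
    (hmono : ∀ x ∈ S, x ≠ u → c' x + d = 0 → p u < p x ∧ t < r' x) :
    BLay p q S F (fun x => if x = u then 0 else c' x + d) (fun x => if x = u then t else r' x) := by
  have hcard : (S.erase u).card + 1 = S.card := Finset.card_erase_add_one hu
  have sym : ∀ x y, BAdj p q x y ↔ BAdj p q y x := fun x y => or_comm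
  have hadj' : ∀ x ∈ S, x ≠ u → (BAdj p q x u ↔ (c' x + d = 1 ∧ r' x < t)) :=
    fun x hx hne => (sym x u).trans (hadj x hx hne)
  refine ⟨?_, ?_, ?_, ?_⟩
  · intro x hx
    by_cases e : x = u
    · simp [e, huF]
    · simpa [e] using h0 x hx e
  · intro x hx
    by_cases e : x = u
    · simp only [e, if_true]; omega
    · have := hl.bd x (Finset.mem_erase.2 ⟨e, hx⟩)
      simp only [e, if_false]; omega
  · intro x hx y hy
    by_cases e : x = u <;> by_cases e' : y = u
    · subst e; subst e'
      simp [BAdj, BInv, BGrid]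
    · subst e
      rw [hadj y hy e']
      simp [BGrid, e']
    · subst e'
      rw [hadj' x hx e]
      simp [BGrid, e]
    · rw [hl.adj x (Finset.mem_erase.2 ⟨e, hx⟩) y (Finset.mem_erase.2 ⟨e', hy⟩)]
      simp only [BGrid, e, e', if_false]
      constructor
      · rintro (h | h)
        · exact Or.inl ⟨by omega, h.2⟩
        · exact Or.inr ⟨by omega, h.2⟩
      · rintro (h | h)
        · exact Or.inl ⟨by omega, h.2⟩
        · exact Or.inr ⟨by omega, h.2⟩
  · intro x hx y hy hc hp
    by_cases e : x = u <;> by_cases e' : y = u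
    · subst e; subst e'; omega
    · simp only [e, e', if_true, if_false] at hc ⊢
      exact (hmono y hy e' hc.symm).2
    · simp only [e, e', if_true, if_false] at hc ⊢
      have := (hmono x hx e hc).1
      subst e'; omega
    · simp only [e, e', if_false] at hc ⊢
      exact hl.mono x (Finset.mem_erase.2 ⟨e, hx⟩) y (Finset.mem_erase.2 ⟨e', hy⟩) (by omega) hp

lemma exists_lay {V : Type} [DecidableEq V] (k : ℕ) : ∀ (p q : V → ℕ) (U : V → Prop)
    (_ : BConf p q U) (S F : Finset V) (_ : S.card = k) (_ : BStart p U S F),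
    ∃ c r, BLay p q S F c r := by
  induction k with
  | zero =>
    intro p q U h S F hS hF
    rw [Finset.card_eq_zero] at hS
    obtain ⟨x, hx⟩ := hF.ne
    have := hF.sub hx
    simp [hS] at this
  | succ k ih =>
    intro p q U h S F hS hF
    obtain ⟨u, huF, hmin⟩ := F.exists_min_image p hF.ne
    have hu := hF.sub huF
    have huU := hF.inU u huF
    have hcard : (S.erase u).card = k := by rw [Finset.card_erase_of_mem hu]; omega
    have hadjU : ∀ y, BAdj p q u y ↔ BInv p q u y := fun y =>
      ⟨fun hy => hy.resolve_right fun h' => h.lo _ _ h' huU, Or.inl⟩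
    have hltF : ∀ f ∈ F, f ≠ u → p u < p f := fun f hf hne =>
      lt_of_le_of_ne (hmin f hf) (fun e => hne (h.pinj e).symm)
    have incU : ∀ y, U y → p u < p y → q u < q y := by
      intro y hy hp
      by_contra hcon
      have : q u ≠ q y := fun e => by rw [h.qinj e] at hp; omega
      exact h.lo u y ⟨hp, by omega⟩ hy
    by_cases hF1 : F = {u}
    · classical
      have hafter : ∀ y ∈ S, U y → y ≠ u → p u < p y := by
        intro y hy hyU hne
        by_contra hcon
        have h1 : p y ≠ p u := fun e => hne (h.pinj e)
        have := hF.init u huF y hy hyU (by omega)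
        rw [hF1, Finset.mem_singleton] at this
        exact hne this
      have h0 : ∀ (c' : V → ℕ), ∀ x ∈ S, x ≠ u → (c' x + 1 = 0 ↔ x ∈ F) := by
        intro c' x _ hx
        simp [hF1, hx]
      by_cases hG : ((S.erase u).filter (fun y => BInv p q u y)).Nonempty
      · obtain ⟨c, r, hl⟩ := ih q p _ h.swap (S.erase u)
          ((S.erase u).filter (fun y => BInv p q u y)) hcard
          ⟨Finset.filter_subset _ _, hG, fun x hx => h.lo u x (Finset.mem_filter.1 hx).2, by
            intro x hx y hy hyU hlt
            have hx := (Finset.mem_filter.1 hx).2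
            refine Finset.mem_filter.2 ⟨hy, hF.before u huF y (Finset.mem_of_mem_erase hy) hyU, ?_⟩
            exact hlt.trans hx.2, by
            intro x hx y hy hyU
            have hx := (Finset.mem_filter.1 hx).2
            rw [not_not] at hyU
            have h1 := hafter y (Finset.mem_of_mem_erase hy) hyU (Finset.ne_of_mem_erase hy)
            exact hx.2.trans (incU y hyU h1)⟩
        have hl := hl.swap h.qinj
        obtain ⟨t, ht, -⟩ := Order.exists_between_finsets ((S.erase u).image r) ∅ (by simp)
        refine ⟨_, _, lay_insert hu c r t 1 le_rfl (h0 c) huF hl ?_ ?_⟩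
        · intro x hx hne
          have hx' := Finset.mem_erase.2 ⟨hne, hx⟩
          have hz := hl.zero x hx'
          rw [Finset.mem_filter] at hz
          have := ht (r x) (Finset.mem_image_of_mem r hx')
          rw [hadjU]
          constructor
          · intro h'
            exact ⟨by rw [hz.2 ⟨hx', h'⟩], this⟩
          · intro h'
            exact (hz.1 (by omega)).2
        · intro x _ _ h'; omega
      · have hno : ∀ y ∈ S, y ≠ u → ¬ BInv p q u y := by
          intro y hy hne hi
          exact hG ⟨y, Finset.mem_filter.2 ⟨Finset.mem_erase.2 ⟨hne, hy⟩, hi⟩⟩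
        have key : ∃ F' c r, BLay p q (S.erase u) F' c r := by
          rcases (S.erase u).eq_empty_or_nonempty with he | hne
          · refine ⟨∅, fun _ => 0, fun _ => 0, ?_⟩
            rw [he]
            constructor <;> simp
          · obtain ⟨F', h' | h'⟩ := exists_start h (S.erase u) hne
            · obtain ⟨c, r, hl⟩ := ih p q U h _ F' hcard h'
              exact ⟨F', c, r, hl⟩
            · obtain ⟨c, r, hl⟩ := ih q p _ h.swap _ F' hcard h'
              exact ⟨F', c, r, hl.swap h.qinj⟩
        obtain ⟨F', c, r, hl⟩ := key
        obtain ⟨t, -, ht⟩ := Order.exists_between_finsets ∅ ((S.erase u).image r) (by simp)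
        refine ⟨_, _, lay_insert hu c r t 1 le_rfl (h0 c) huF hl ?_ ?_⟩
        · intro x hx hne
          have hx' := Finset.mem_erase.2 ⟨hne, hx⟩
          have := ht (r x) (Finset.mem_image_of_mem r hx')
          rw [hadjU]
          constructor
          · intro h'; exact absurd h' (hno x hx hne)
          · intro h'; exact absurd h'.2 (not_lt.2 this.le)
        · intro x _ _ h'; omega
    · classical
      have hne : (F.erase u).Nonempty := by
        by_contra hcon
        rw [Finset.not_nonempty_iff_eq_empty] at hcon
        apply hF1
        rw [← Finset.insert_erase huF, hcon]; rfl
      obtain ⟨c, r, hl⟩ := ih p q U h (S.erase u) (F.erase u) hcard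
        ⟨Finset.erase_subset_erase _ hF.sub, hne,
          fun x hx => hF.inU x (Finset.mem_of_mem_erase hx),
          fun x hx y hy hyU hlt => Finset.mem_erase.2 ⟨Finset.ne_of_mem_erase hy,
            hF.init x (Finset.mem_of_mem_erase hx) y (Finset.mem_of_mem_erase hy) hyU hlt⟩,
          fun x hx y hy hyU =>
            hF.before x (Finset.mem_of_mem_erase hx) y (Finset.mem_of_mem_erase hy) hyU⟩
      -- neighbours of u are below all of F.erase u
      have hnb : ∀ l ∈ S, l ≠ u → BInv p q u l → ∀ f ∈ F.erase u, c l = 1 ∧ r l < r f := by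
        intro l hlS hlu hi f hf
        have hfF := Finset.mem_of_mem_erase hf
        have hfS : f ∈ S.erase u := Finset.erase_subset_erase _ hF.sub hf
        have h1 := hltF f hfF (Finset.ne_of_mem_erase hf)
        have h2 := incU f (hF.inU f hfF) h1
        have h3 : BAdj p q f l := Or.inl ⟨hF.before f hfF l hlS (h.lo _ _ hi), hi.2.trans h2⟩
        rw [hl.adj f hfS l (Finset.mem_erase.2 ⟨hlu, hlS⟩)] at h3
        have h4 := (hl.zero f hfS).2 hf
        rcases h3 with h3 | h3
        · exact ⟨by omega, h3.2⟩
        · omega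
      obtain ⟨f₀, hf₀⟩ := hne
      obtain ⟨t, htlo, hthi⟩ := Order.exists_between_finsets
        (((S.erase u).filter (fun y => BInv p q u y)).image r)
        (((S.erase u).filter (fun y => y ∈ F.erase u ∨ (c y = 1 ∧ ¬ BInv p q u y))).image r) (by
          intro a ha b hb
          obtain ⟨l, hl1, rfl⟩ := Finset.mem_image.1 ha
          obtain ⟨y, hy1, rfl⟩ := Finset.mem_image.1 hb
          obtain ⟨hlS, hi⟩ := Finset.mem_filter.1 hl1
          obtain ⟨hyS, hy⟩ := Finset.mem_filter.1 hy1
          have hlS' := Finset.mem_of_mem_erase hlS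
          have hlu := Finset.ne_of_mem_erase hlS
          have hyS' := Finset.mem_of_mem_erase hyS
          have hyu := Finset.ne_of_mem_erase hyS
          rcases hy with hy | ⟨hc, hy⟩
          · exact (hnb l hlS' hlu hi y hy).2
          · have hcl := (hnb l hlS' hlu hi f₀ hf₀).1
            have hnadj : ¬ BAdj p q l y := by
              rw [hl.adj l hlS y hyS]
              rintro (h' | h') <;> omega
            apply hl.mono l hlS y hyS (by omega)
            have hpu : p u < p y := by
              by_cases hyU : U y
              · by_contra hcon
                have h1 : p y ≠ p u := fun e => hyu (h.pinj e)
                have h2 := hF.init u huF y hyS' hyU (by omega)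
                have := hmin y h2
                omega
              · exact hF.before u huF y hyS' hyU
            have hq : q l < q y := by
              by_contra hcon
              exact hy ⟨hpu, by have := hi.2; omega⟩
            by_contra hcon
            have hne : p l ≠ p y := fun e => by rw [h.pinj e] at hq; omega
            exact hnadj (Or.inr ⟨by omega, hq⟩))
      refine ⟨_, _, lay_insert hu c r t 0 (by omega) ?_ huF hl ?_ ?_⟩
      · intro x hx hxu
        have := hl.zero x (Finset.mem_erase.2 ⟨hxu, hx⟩)
        rw [Finset.mem_erase] at this
        rw [Nat.add_zero, this]
        simp [hxu]
      · intro x hx hxu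
        have hx' := Finset.mem_erase.2 ⟨hxu, hx⟩
        rw [hadjU, Nat.add_zero]
        constructor
        · intro hi
          exact ⟨(hnb x hx hxu hi f₀ hf₀).1,
            htlo _ (Finset.mem_image_of_mem r (Finset.mem_filter.2 ⟨hx', hi⟩))⟩
        · rintro ⟨h1, h2⟩
          by_contra hi
          have := hthi _ (Finset.mem_image_of_mem r (Finset.mem_filter.2 ⟨hx', Or.inr ⟨h1, hi⟩⟩))
          exact lt_asymm h2 this
      · intro x hx hxu hc
        have hx' := Finset.mem_erase.2 ⟨hxu, hx⟩
        have hxF := (hl.zero x hx').1 hc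
        exact ⟨hltF x (Finset.mem_of_mem_erase hxF) hxu,
          hthi _ (Finset.mem_image_of_mem r (Finset.mem_filter.2 ⟨hx', Or.inl hxF⟩))⟩

lemma exists_rank {V : Type} [Fintype V] {α : Type} [LinearOrder α] (p : V → α)
    (hp : Function.Injective p) :
    ∃ e : V ≃ Fin (Fintype.card V), ∀ x y, e x < e y ↔ p x < p y := by
  let _ : LinearOrder V := LinearOrder.lift' p hp
  let e := Fintype.orderIsoFinOfCardEq V rfl
  exact ⟨e.symm.toEquiv, fun x y => e.symm.lt_iff_lt⟩

lemma permGraph_adj {n : ℕ} (π : Equiv.Perm (Fin n)) (i j : Fin n) :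
    (permGraph π).Adj i j ↔ (i < j ∧ π j < π i) ∨ (j < i ∧ π i < π j) := by
  unfold permGraph
  rw [SimpleGraph.fromRel_adj]
  constructor
  · exact fun h => h.2
  · intro h
    refine ⟨?_, h⟩
    rintro rfl
    simp at h

lemma isPerm_of_keys {V : Type} [Fintype V] {α β : Type} [LinearOrder α] [LinearOrder β]
    (p : V → α) (q : V → β) (hp : Function.Injective p) (hq : Function.Injective q)
    (G : SimpleGraph V)
    (h : ∀ x y, G.Adj x y ↔ (p x < p y ∧ q y < q x) ∨ (p y < p x ∧ q x < q y)) :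
    IsPermutationGraph G := by
  obtain ⟨e, he⟩ := exists_rank p hp
  obtain ⟨f, hf⟩ := exists_rank q hq
  refine ⟨_, e.symm.trans f, ⟨⟨e, ?_⟩⟩⟩
  intro a b
  rw [permGraph_adj, h]
  simp [he, hf]

/-- The universal graph on the grid. -/
def gridGraph (n : ℕ) : SimpleGraph (Fin n × Fin n) where
  Adj x y := (y.1.val = x.1.val + 1 ∧ y.2 < x.2) ∨ (x.1.val = y.1.val + 1 ∧ x.2 < y.2)
  symm := ⟨fun _ _ h => h.symm⟩
  loopless := ⟨fun x h => by rcases h with h | h <;> omega⟩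

lemma gridGraph_perm (n : ℕ) : IsPermutationGraph (gridGraph n) := by
  apply isPerm_of_keys
    (fun x => (toLex ((x.1.val + 1) / 2, toLex (x.2.val, x.1.val)) : ℕ ×ₗ (ℕ ×ₗ ℕ)))
    (fun x => (toLex (x.1.val / 2, toLex (x.2.val, x.1.val)) : ℕ ×ₗ (ℕ ×ₗ ℕ)))
  · rintro ⟨a, b⟩ ⟨c, d⟩ h
    simp only [EmbeddingLike.apply_eq_iff_eq, Prod.mk.injEq] at h
    exact Prod.ext (Fin.ext h.2.2) (Fin.ext h.2.1)
  · rintro ⟨a, b⟩ ⟨c, d⟩ h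
    simp only [EmbeddingLike.apply_eq_iff_eq, Prod.mk.injEq] at h
    exact Prod.ext (Fin.ext h.2.2) (Fin.ext h.2.1)
  · rintro ⟨a, b⟩ ⟨c, d⟩
    simp only [gridGraph, Prod.Lex.toLex_lt_toLex, Fin.lt_def]
    omega

lemma gridGraph_embed (n : ℕ) (hn : 0 < n) (π : Equiv.Perm (Fin n))
    (hb : IsBipartiteGraph (permGraph π)) : Nonempty (permGraph π ↪g gridGraph n) := by
  obtain ⟨A, hA, hA'⟩ := hb
  let p : Fin n → ℕ := fun i => i.val
  let q : Fin n → ℕ := fun i => (π i).val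
  have hpadj : ∀ i j, (permGraph π).Adj i j ↔ BAdj p q i j := fun i j => permGraph_adj π i j
  have hconf : BConf p q (fun x => ∃ y, BInv p q x y) := by
    refine ⟨Fin.val_injective, Fin.val_injective.comp π.injective, fun x y h => ⟨y, h⟩, ?_⟩
    rintro x y h ⟨z, h'⟩
    have a1 : (permGraph π).Adj x y := (hpadj _ _).2 (Or.inl h)
    have a2 : (permGraph π).Adj y z := (hpadj _ _).2 (Or.inl h')
    have a3 : (permGraph π).Adj x z :=
      (hpadj _ _).2 (Or.inl ⟨h.1.trans h'.1, h'.2.trans h.2⟩)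
    by_cases hx : x ∈ A <;> by_cases hy : y ∈ A <;> by_cases hz : z ∈ A
    · exact hA hx hy a1
    · exact hA hx hy a1
    · exact hA hx hz a3
    · exact hA' hy hz a2
    · exact hA hy hz a2
    · exact hA' hx hz a3
    · exact hA' hx hy a1
    · exact hA' hx hy a1
  have key : ∃ F c r, BLay p q Finset.univ F c r := by
    obtain ⟨F', h' | h'⟩ := exists_start hconf Finset.univ ⟨⟨0, hn⟩, Finset.mem_univ _⟩
    · obtain ⟨c, r, hl⟩ := exists_lay n p q _ hconf _ F' (by simp) h'
      exact ⟨F', c, r, hl⟩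
    · obtain ⟨c, r, hl⟩ := exists_lay n q p _ hconf.swap _ F' (by simp) h'
      exact ⟨F', c, r, hl.swap hconf.qinj⟩
  obtain ⟨F, c, r, hl⟩ := key
  have hc : ∀ x, c x < n := fun x => by simpa using hl.bd x (Finset.mem_univ _)
  let k : Fin n → ℕ := fun x => (Finset.univ.filter (fun y => r y < r x)).card
  have hk1 : ∀ x y, r x ≤ r y → k x ≤ k y := by
    intro x y h
    apply Finset.card_le_card
    intro z hz
    rw [Finset.mem_filter] at hz ⊢
    exact ⟨hz.1, hz.2.trans_le h⟩
  have hk2 : ∀ x y, r x < r y → k x < k y := by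
    intro x y h
    apply Finset.card_lt_card
    rw [Finset.ssubset_iff_of_subset]
    · exact ⟨x, by simp [h], by simp⟩
    · intro z hz
      rw [Finset.mem_filter] at hz ⊢
      exact ⟨hz.1, hz.2.trans h⟩
  have hk : ∀ x y, k x < k y ↔ r x < r y := fun x y =>
    ⟨fun h => by
      by_contra hcon
      have := hk1 y x (not_lt.1 hcon)
      omega, hk2 x y⟩
  have hkn : ∀ x, k x < n := by
    intro x
    have : k x < (Finset.univ : Finset (Fin n)).card := by
      apply Finset.card_lt_card
      rw [Finset.ssubset_iff_of_subset (Finset.subset_univ _)]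
      exact ⟨x, by simp, by simp⟩
    simpa using this
  refine ⟨⟨⟨fun x => (⟨c x, hc x⟩, ⟨k x, hkn x⟩), ?_⟩, ?_⟩⟩
  · intro x y h
    simp only [Prod.mk.injEq, Fin.mk.injEq] at h
    by_contra hne
    have hxy : p x ≠ p y := fun e => hne (hconf.pinj e)
    rcases lt_or_gt_of_ne hxy with h' | h'
    · have := hk2 _ _ (hl.mono x (Finset.mem_univ _) y (Finset.mem_univ _) h.1 h')
      omega
    · have := hk2 _ _ (hl.mono y (Finset.mem_univ _) x (Finset.mem_univ _) h.1.symm h')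
      omega
  · intro x y
    rw [hpadj, hl.adj x (Finset.mem_univ _) y (Finset.mem_univ _)]
    change ((c y = c x + 1 ∧ k y < k x) ∨ (c x = c y + 1 ∧ k x < k y)) ↔ _
    rw [hk, hk]
    rfl

/-- For every positive `n` there is a bipartite permutation graph with exactly `n²`
vertices containing every bipartite permutation graph with `n` vertices as an induced
subgraph. -/
theorem exists_universal_bipartite_permutation_graph (n : ℕ) (hn : 0 < n) :
    ∃ U : SimpleGraph (Fin (n ^ 2)), IsPermutationGraph U ∧ IsBipartiteGraph U ∧
      ∀ (W : Type) [Fintype W] (H : SimpleGraph W), Fintype.card W = n →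
        IsPermutationGraph H → IsBipartiteGraph H → Nonempty (H ↪g U) := by
  let e : Fin (n ^ 2) ≃ Fin n × Fin n := (finCongr (sq n)).trans finProdFinEquiv.symm
  let i : (gridGraph n).comap e ≃g gridGraph n := SimpleGraph.Iso.comap e _
  refine ⟨(gridGraph n).comap e, ?_, ?_, ?_⟩
  · obtain ⟨m, π, ⟨f⟩⟩ := gridGraph_perm n
    exact ⟨m, π, ⟨i.trans f⟩⟩
  · refine ⟨{x | (e x).1.val % 2 = 0}, ?_, ?_⟩
    · intro x hx y hy h
      simp only [Set.mem_ofPred_eq] at hx hy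
      rcases h with h | h <;> omega
    · intro x hx y hy h
      simp only [Set.mem_compl_iff, Set.mem_ofPred_eq] at hx hy
      rcases h with h | h <;> omega
  · rintro W _ H hW ⟨m, π, ⟨f⟩⟩ ⟨A, hA, hA'⟩
    have hm : m = n := by
      rw [← hW, Fintype.card_congr f.toEquiv, Fintype.card_fin]
    subst hm
    obtain ⟨g⟩ := gridGraph_embed m hn π ⟨f.symm ⁻¹' A, by
      intro x hx y hy h
      exact hA hx hy (f.symm.map_adj_iff.2 h), by
      intro x hx y hy h
      exact hA' hx hy (f.symm.map_adj_iff.2 h)⟩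
    exact ⟨(f.toEmbedding.trans g).trans i.symm.toEmbedding⟩
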